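/- Let G be a finite group with λ(G) = |G| − 5. Then the maximum order of an element of G is 3, 4, or 6; in particular G has no element of order 5 and no element of order greater than 6. -/

import Mathlib

/-- A subgroup is maximal cyclic if it is cyclic and not properly contained
in any cyclic subgroup. -/
def IsMaximalCyclic {G : Type*} [Group G] (H : Subgroup G) : Prop :=
  IsCyclic H ∧ ∀ K : Subgroup G, IsCyclic K → H ≤ K → H = K

/-- `lambdaCover G` is the number of maximal cyclic subgroups of `G`. -/
noncomputable def lambdaCover (G : Type*) [Group G] : ℕ :=
  Nat.card {H : Subgroup G // IsMaximalCyclic H}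

/-!
Pick one generator of each maximal cyclic subgroup, and let `S` be the set of chosen generators, so
that `|Sᶜ| = |G| - λ(G)`. A maximal cyclic subgroup `H` meets `S` in a single generator, so it has
`|H| - 1` elements in `Sᶜ`; this bounds element orders by `|Sᶜ| + 1`, and in a group of exponent
two it leaves only the identity outside `S`.

Suppose `|Sᶜ| = p` is a prime greater than `3` and `C` is a maximal cyclic subgroup of order `p`.
Then `Sᶜ` has exactly one element `n` outside `C`. Any other nontrivial maximal cyclic subgroup `D`
meets `C` trivially, so it has order `2`, or order `3` if it contains `n`. Hence `C` is the only
maximal cyclic subgroup of order `p`, and the one containing `n` is the only one of order `3`. Both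
are therefore normal, so they commute and produce an element of order `3p > p + 1`.
-/

open Subgroup

section MaximalCyclic

variable {G : Type*} [Group G]

theorem isMaximalCyclic_iff_maximal {H : Subgroup G} :
    IsMaximalCyclic H ↔ Maximal (fun K : Subgroup G ↦ IsCyclic K) H := by
  rw [maximal_iff]
  rfl

theorem exists_isMaximalCyclic_mem [Finite G] (g : G) :
    ∃ H : Subgroup G, IsMaximalCyclic H ∧ g ∈ H := by
  obtain ⟨H, hgH, hH⟩ := Finite.exists_le_maximal
    (p := fun K : Subgroup G ↦ IsCyclic K) (a := zpowers g) inferInstance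
  exact ⟨H, isMaximalCyclic_iff_maximal.2 hH, zpowers_le.1 hgH⟩

namespace IsMaximalCyclic

variable {H K : Subgroup G}

theorem map_mulEquiv {G' : Type*} [Group G'] (hH : IsMaximalCyclic H) (e : G ≃* G') :
    IsMaximalCyclic (H.map e.toMonoidHom) := by
  refine ⟨(e.subgroupMap H).isCyclic.1 hH.1, fun K hK hle ↦ ?_⟩
  have hcomap : H = K.comap e.toMonoidHom := by
    refine hH.2 _ ?_ (map_le_iff_le_comap.1 hle)
    rw [comap_equiv_eq_map_symm']
    exact (e.symm.subgroupMap K).isCyclic.1 hK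
  rw [hcomap, map_comap_eq_self_of_surjective e.surjective]

theorem characteristic_of_forall_card_eq (hH : IsMaximalCyclic H)
    (huniq : ∀ K : Subgroup G, IsMaximalCyclic K → Nat.card K = Nat.card H → K = H) :
    H.Characteristic :=
  characteristic_iff_map_eq.2 fun e ↦
    huniq _ (hH.map_mulEquiv e) (Nat.card_congr (e.subgroupMap H).toEquiv).symm

theorem disjoint_of_prime_card (hH : IsMaximalCyclic H) (hp : (Nat.card H).Prime)
    (hK : IsCyclic K) (hne : H ≠ K) : Disjoint H K := by
  have : Finite H := Nat.finite_of_card_ne_zero hp.ne_zero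
  rcases hp.eq_one_or_self_of_dvd _ (card_dvd_of_le (inf_le_left : H ⊓ K ≤ H)) with h | h
  · exact disjoint_iff.2 (eq_bot_of_card_eq _ h)
  · have hinf : H ⊓ K = H := eq_of_le_of_card_ge inf_le_left h.ge
    exact absurd (hH.2 K hK (inf_eq_left.1 hinf)) hne

end IsMaximalCyclic

theorem sdiff_sdiff_one_subset_of_disjoint {C D : Subgroup G} (S : Set G) (hCD : Disjoint C D) :
    ((D : Set G) \ S) \ {1} ⊆ Sᶜ \ (C : Set G) := by
  rintro x ⟨⟨hxD, hxS⟩, hx⟩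
  exact ⟨hxS, fun hxC ↦ hx (disjoint_def.1 hCD hxC hxD)⟩

/-- A set consisting of exactly one generator of each maximal cyclic subgroup of `G`. Such a set
has `lambdaCover G` elements, so its complement measures the difference between `Nat.card G` and
`lambdaCover G`. -/
def IsGeneratorTransversal (S : Set G) : Prop :=
  Set.BijOn zpowers S {H | IsMaximalCyclic H}

theorem exists_isGeneratorTransversal (G : Type*) [Group G] :
    ∃ S : Set G, IsGeneratorTransversal S := by
  have hsurj : Set.SurjOn zpowers Set.univ {H : Subgroup G | IsMaximalCyclic H} := fun H hH ↦ by
    obtain ⟨g, hg⟩ := H.isCyclic_iff_exists_zpowers_eq_top.1 hH.1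
    exact ⟨g, trivial, hg⟩
  obtain ⟨S, -, hS⟩ := hsurj.exists_bijOn_subset
  exact ⟨S, hS⟩

namespace IsGeneratorTransversal

variable {S : Set G} {C D H : Subgroup G} {n : G}

theorem exists_inter_eq_singleton (hS : IsGeneratorTransversal S) (hH : IsMaximalCyclic H) :
    ∃ c, zpowers c = H ∧ (H : Set G) ∩ S = {c} := by
  obtain ⟨c, hcS, rfl⟩ := hS.surjOn hH
  refine ⟨c, rfl, Set.eq_singleton_iff_unique_mem.2 ⟨⟨mem_zpowers c, hcS⟩, ?_⟩⟩
  rintro x ⟨hxc, hxS⟩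
  exact hS.injOn hxS hcS ((hS.mapsTo hxS).2 _ inferInstance (zpowers_le.2 hxc))

variable [Finite G]

theorem lambdaCover_add_ncard_compl (hS : IsGeneratorTransversal S) :
    lambdaCover G + Sᶜ.ncard = Nat.card G := by
  have hcard : S.ncard = lambdaCover G := hS.ncard_eq
  rw [← hcard, Set.ncard_add_ncard_compl]

theorem ncard_sdiff_add_one (hS : IsGeneratorTransversal S) (hH : IsMaximalCyclic H) :
    ((H : Set G) \ S).ncard + 1 = Nat.card H := by
  obtain ⟨c, -, hc⟩ := hS.exists_inter_eq_singleton hH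
  have hsplit := Set.ncard_inter_add_ncard_sdiff_eq_ncard (H : Set G) S
  rw [hc, Set.ncard_singleton, add_comm] at hsplit
  exact hsplit

theorem ncard_sdiff_sdiff_one_add_two (hS : IsGeneratorTransversal S) (hH : IsMaximalCyclic H)
    (hbot : H ≠ ⊥) : (((H : Set G) \ S) \ {1}).ncard + 2 = Nat.card H := by
  have hone : (1 : G) ∉ S := fun h1 ↦ by
    obtain ⟨c, rfl, hc⟩ := hS.exists_inter_eq_singleton hH
    have hc1 : 1 = c := hc.subset ⟨one_mem _, h1⟩
    exact hbot (zpowers_eq_bot.2 hc1.symm)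
  have hmem : (1 : G) ∈ (H : Set G) \ S := ⟨one_mem H, hone⟩
  rw [← hS.ncard_sdiff_add_one hH, ← Set.ncard_sdiff_singleton_add_one hmem]

theorem ncard_compl_sdiff_add_card (hS : IsGeneratorTransversal S) (hH : IsMaximalCyclic H) :
    (Sᶜ \ (H : Set G)).ncard + Nat.card H = Sᶜ.ncard + 1 := by
  have hsplit := Set.ncard_inter_add_ncard_sdiff_eq_ncard Sᶜ (H : Set G)
  rw [Set.inter_comm, ← Set.sdiff_eq] at hsplit
  have hcard := hS.ncard_sdiff_add_one hH
  lia

theorem two_lt_card_of_mem (hS : IsGeneratorTransversal S) (hH : IsMaximalCyclic H)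
    {x : G} (hxH : x ∈ H) (hxS : x ∉ S) (hx : x ≠ 1) : 2 < Nat.card H := by
  have hbot : H ≠ ⊥ := by
    rintro rfl
    exact hx (mem_bot.1 hxH)
  have hpos : 0 < (((H : Set G) \ S) \ {1}).ncard := (Set.ncard_pos).2 ⟨x, ⟨hxH, hxS⟩, hx⟩
  have hcard := hS.ncard_sdiff_sdiff_one_add_two hH hbot
  lia

theorem card_le_three_of_disjoint (hS : IsGeneratorTransversal S)
    (hn : Sᶜ \ (C : Set G) = {n}) (hD : IsMaximalCyclic D) (hCD : Disjoint C D) :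
    Nat.card D ≤ 3 := by
  rcases eq_or_ne D ⊥ with rfl | hbot
  · simp
  have hle : (((D : Set G) \ S) \ {1}).ncard ≤ ({n} : Set G).ncard :=
    Set.ncard_le_ncard (hn ▸ sdiff_sdiff_one_subset_of_disjoint S hCD)
  rw [Set.ncard_singleton] at hle
  have hcard := hS.ncard_sdiff_sdiff_one_add_two hD hbot
  lia

theorem mem_of_disjoint_of_two_lt_card (hS : IsGeneratorTransversal S)
    (hn : Sᶜ \ (C : Set G) = {n}) (hD : IsMaximalCyclic D) (hCD : Disjoint C D)
    (hcard : 2 < Nat.card D) : n ∈ D := by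
  have hbot : D ≠ ⊥ := by
    rintro rfl
    simp at hcard
  have hncard := hS.ncard_sdiff_sdiff_one_add_two hD hbot
  obtain ⟨x, hx⟩ : (((D : Set G) \ S) \ {1}).Nonempty := (Set.ncard_pos).1 (by lia)
  have hxn : x ∈ ({n} : Set G) := hn ▸ sdiff_sdiff_one_subset_of_disjoint S hCD hx
  exact Set.mem_singleton_iff.1 hxn ▸ hx.1.1

end IsGeneratorTransversal

theorem orderOf_add_lambdaCover_le [Finite G] (g : G) :
    orderOf g + lambdaCover G ≤ Nat.card G + 1 := by
  obtain ⟨S, hS⟩ := exists_isGeneratorTransversal G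
  obtain ⟨H, hH, hgH⟩ := exists_isMaximalCyclic_mem g
  have horder : orderOf g ≤ Nat.card H := H.orderOf_le_card (Set.toFinite _) hgH
  have hcard := hS.ncard_compl_sdiff_add_card hH
  have hcompl := hS.lambdaCover_add_ncard_compl
  lia

theorem card_le_lambdaCover_add_one_of_orderOf_le_two [Finite G]
    (h : ∀ g : G, orderOf g ≤ 2) : Nat.card G ≤ lambdaCover G + 1 := by
  obtain ⟨S, hS⟩ := exists_isGeneratorTransversal G
  have hsub : Sᶜ ⊆ {1} := fun x hxS ↦ by
    by_contra hx
    obtain ⟨H, hH, hxH⟩ := exists_isMaximalCyclic_mem x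
    obtain ⟨c, rfl⟩ := H.isCyclic_iff_exists_zpowers_eq_top.1 hH.1
    have hlt := hS.two_lt_card_of_mem hH hxH hxS hx
    rw [Nat.card_zpowers] at hlt
    exact hlt.not_ge (h c)
  have hle := Set.ncard_le_ncard hsub
  rw [Set.ncard_singleton] at hle
  have hcompl := hS.lambdaCover_add_ncard_compl
  lia

theorem exists_isMaximalCyclic_card_eq_of_orderOf_eq [Finite G] {p : ℕ} (hp : 1 < p)
    (h : Nat.card G = lambdaCover G + p) {g : G} (hg : orderOf g = p) :
    ∃ C : Subgroup G, IsMaximalCyclic C ∧ g ∈ C ∧ Nat.card C = p := by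
  obtain ⟨C, hC, hgC⟩ := exists_isMaximalCyclic_mem g
  refine ⟨C, hC, hgC, ?_⟩
  have hdvd : p ∣ Nat.card C := hg ▸ C.orderOf_dvd_natCard hgC
  have hle : Nat.card C ≤ p + 1 := by
    obtain ⟨c, rfl⟩ := C.isCyclic_iff_exists_zpowers_eq_top.1 hC.1
    rw [Nat.card_zpowers]
    have hbound := orderOf_add_lambdaCover_le c
    lia
  exact Nat.eq_of_dvd_of_lt_two_mul Nat.card_pos.ne' hdvd (by lia)

theorem exists_isMaximalCyclic_card_eq_three_of_card_eq [Finite G] {p : ℕ} (hp : p.Prime)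
    (h : Nat.card G = lambdaCover G + p) {C : Subgroup G} (hC : IsMaximalCyclic C)
    (hCp : Nat.card C = p) :
    ∃ D : Subgroup G, IsMaximalCyclic D ∧ Nat.card D = 3 ∧
      ∀ K : Subgroup G, IsMaximalCyclic K → K ≠ C → 2 < Nat.card K → K = D := by
  obtain ⟨S, hS⟩ := exists_isGeneratorTransversal G
  obtain ⟨n, hn⟩ : ∃ n, Sᶜ \ (C : Set G) = {n} := by
    refine Set.ncard_eq_one.1 ?_
    have hcompl := hS.lambdaCover_add_ncard_compl
    have hcard := hS.ncard_compl_sdiff_add_card hC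
    lia
  have hdisj {K : Subgroup G} (hK : IsMaximalCyclic K) (hKC : K ≠ C) : Disjoint C K :=
    hC.disjoint_of_prime_card (hCp ▸ hp) hK.1 hKC.symm
  obtain ⟨hnS, hnC⟩ : n ∈ Sᶜ \ (C : Set G) := hn ▸ Set.mem_singleton n
  have hn1 : n ≠ 1 := fun h1 ↦ hnC (h1 ▸ one_mem C)
  obtain ⟨D, hD, hnD⟩ := exists_isMaximalCyclic_mem n
  have hDC : D ≠ C := fun hDC ↦ hnC (hDC ▸ hnD)
  have hD3 : Nat.card D = 3 :=
    le_antisymm (hS.card_le_three_of_disjoint hn hD (hdisj hD hDC))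
      (hS.two_lt_card_of_mem hD hnD hnS hn1)
  refine ⟨D, hD, hD3, fun K hK hKC hK2 ↦ ?_⟩
  have hnK : n ∈ K := hS.mem_of_disjoint_of_two_lt_card hn hK (hdisj hK hKC) hK2
  by_contra hKD
  have hDK : Disjoint D K :=
    hD.disjoint_of_prime_card (hD3 ▸ Nat.prime_three) hK.1 (Ne.symm hKD)
  exact hn1 (disjoint_def.1 hDK hnD hnK)

theorem orderOf_ne_prime_of_card_eq_lambdaCover_add [Finite G] {p : ℕ} (hp : p.Prime)
    (hp3 : 3 < p) (h : Nat.card G = lambdaCover G + p) (g : G) : orderOf g ≠ p := by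
  intro hg
  obtain ⟨C, hC, hgC, hCp⟩ := exists_isMaximalCyclic_card_eq_of_orderOf_eq hp.one_lt h hg
  obtain ⟨D, hD, hD3, huniq⟩ := exists_isMaximalCyclic_card_eq_three_of_card_eq hp h hC hCp
  have hDC : D ≠ C := by
    rintro rfl
    lia
  have hCchar : C.Characteristic := hC.characteristic_of_forall_card_eq fun K hK hcard ↦ by
    by_contra hKC
    obtain rfl : K = D := huniq K hK hKC (by lia)
    lia
  have hDchar : D.Characteristic := hD.characteristic_of_forall_card_eq fun K hK hcard ↦
    huniq K hK (by rintro rfl; lia) (by lia)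
  obtain ⟨d, rfl⟩ := D.isCyclic_iff_exists_zpowers_eq_top.1 hD.1
  rw [Nat.card_zpowers] at hD3
  have hcomm : Commute g d := commute_of_normal_of_disjoint _ _ inferInstance inferInstance
    (hC.disjoint_of_prime_card (hCp ▸ hp) hD.1 hDC.symm) _ _ hgC (mem_zpowers d)
  have hcop : (orderOf g).Coprime (orderOf d) := by
    rw [hg, hD3]
    exact (Nat.coprime_primes hp Nat.prime_three).2 hp3.ne'
  have hbound := orderOf_add_lambdaCover_le (g * d)
  rw [hcomm.orderOf_mul_eq_mul_orderOf_of_coprime hcop, hg, hD3] at hbound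
  lia

end MaximalCyclic

theorem max_order_of_lambda_eq_card_sub_five {G : Type*} [Group G] [Finite G]
    [Nontrivial G] (h : Nat.card G = lambdaCover G + 5)
    (m : ℕ) (hm : IsGreatest {n | ∃ g : G, orderOf g = n} m) :
    m = 3 ∨ m = 4 ∨ m = 6 := by
  obtain ⟨⟨g, rfl⟩, hub⟩ := hm
  have hle : orderOf g ≤ 6 := by
    have hbound := orderOf_add_lambdaCover_le g
    lia
  have hge : 2 < orderOf g := by
    by_contra! hg2
    have hcard := card_le_lambdaCover_add_one_of_orderOf_le_two fun x : G ↦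
      (hub ⟨x, rfl⟩).trans hg2
    lia
  have hne : orderOf g ≠ 5 :=
    orderOf_ne_prime_of_card_eq_lambdaCover_add Nat.prime_five (by norm_num) h g
  lia
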